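/- Assume the region where V = β is nonempty, that a cut-off function η with constant C_η exists, and that β ≥ c_β ε^{-2} for some c_β > 0. For each grid vertex z ∈ εℤ^d (modulo ℤ^d) let λ_z be the periodic Q₁ hat function λ_z(x) = ∏_{i=1}^d max(0, 1 − |x_i − z_i|/ε) (periodized), so that Σ_z λ_z ≡ 1. Then there is a constant C depending only on d, C_η and c_β such that every periodic Lipschitz function u satisfies Σ_{z} |||λ_z u|||² ≤ C · 2^{d+1} (1 + (κ L^d)² L²) · |||u|||². (Lemma 3.2 of the paper, providing the stable-decomposition constant K₁.) -/

import Mathlib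

open MeasureTheory Real
open scoped BigOperators RealInnerProductSpace

noncomputable section

/-- A function on `ℝ^d` is periodic if it is `ℤ^d`-periodic. -/
def ZPeriodic {d : ℕ} (f : (Fin d → ℝ) → ℝ) : Prop :=
  ∀ (x : Fin d → ℝ) (k : Fin d → ℤ), f (x + fun i => (k i : ℝ)) = f x

/-- The unit cell `[0,1)^d`. -/
def unitCell (d : ℕ) : Set (Fin d → ℝ) := Set.univ.pi fun _ => Set.Ico (0 : ℝ) 1

/-- Squared Euclidean norm `|∇f(x)|²` of the (a.e. defined) gradient of `f`. -/
def gradSq {d : ℕ} (f : (Fin d → ℝ) → ℝ) (x : Fin d → ℝ) : ℝ :=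
  ∑ i, (fderiv ℝ f x (Pi.single i 1)) ^ 2

/-- `‖v‖²`, the squared `L²` norm over the unit cell. -/
def l2sq {d : ℕ} (v : (Fin d → ℝ) → ℝ) : ℝ := ∫ x in unitCell d, (v x) ^ 2

/-- `‖∇v‖²_{L²([0,1)^d)}`. -/
def gradL2sq {d : ℕ} (v : (Fin d → ℝ) → ℝ) : ℝ := ∫ x in unitCell d, gradSq v x

/-- `|||v|||²`, the squared energy norm over the unit cell. -/
def energySq {d : ℕ} (V v : (Fin d → ℝ) → ℝ) : ℝ :=
  ∫ x in unitCell d, (gradSq v x + V x * (v x) ^ 2)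

/-- The open grid cell of side `ε` with lower-left corner `ε q`. -/
def gridCell {d : ℕ} (ε : ℝ) (q : Fin d → ℤ) : Set (Fin d → ℝ) :=
  {x | ∀ i, (q i : ℝ) * ε < x i ∧ x i < ((q i : ℝ) + 1) * ε}

/-- `V` is a periodic two-valued potential, constant on each (open) grid cell. -/
def IsGridPotential {d : ℕ} (ε α β : ℝ) (V : (Fin d → ℝ) → ℝ) : Prop :=
  ZPeriodic V ∧ (∀ x, V x = α ∨ V x = β) ∧
    ∀ q : Fin d → ℤ, (∀ x ∈ gridCell ε q, V x = α) ∨ (∀ x ∈ gridCell ε q, V x = β)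

/-- The axis-aligned closed cube of side `ε m` which is the union of the grid cells
`q + r`, `r ∈ {0, …, m-1}^d`. -/
def gridCube {d : ℕ} (ε : ℝ) (q : Fin d → ℤ) (m : ℕ) : Set (Fin d → ℝ) :=
  {x | ∀ i, (q i : ℝ) * ε ≤ x i ∧ x i ≤ ((q i : ℝ) + (m : ℝ)) * ε}

/-- An α-cube: a closed cube, union of grid cells, contained in `closure {V = α}`. -/
def IsAlphaCube {d : ℕ} (ε α : ℝ) (V : (Fin d → ℝ) → ℝ) (q : Fin d → ℤ) (m : ℕ) : Prop :=
  1 ≤ m ∧ gridCube ε q m ⊆ closure {x | V x = α}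

/-- A maximal α-cube: an α-cube maximal under inclusion among α-cubes. -/
def IsMaxAlphaCube {d : ℕ} (ε α : ℝ) (V : (Fin d → ℝ) → ℝ) (q : Fin d → ℤ) (m : ℕ) : Prop :=
  IsAlphaCube ε α V q m ∧ ∀ q' m', IsAlphaCube ε α V q' m' →
    gridCube ε q m ⊆ gridCube ε q' m' → gridCube ε q m = gridCube ε q' m'

/-- `ε L` is the largest side length of a maximal α-cube (with `L = 1` if no α-cube exists):
the maximal width of a potential valley. -/
def IsValleyWidth {d : ℕ} (ε α : ℝ) (V : (Fin d → ℝ) → ℝ) (L : ℕ) : Prop :=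
  IsGreatest {m | ∃ q, IsMaxAlphaCube ε α V q m} L ∨
    ((∀ q m, ¬ IsAlphaCube ε α V q m) ∧ L = 1)

/-- `κ` is the maximal number of maximal α-cubes containing a common α-grid cell. -/
def IsOverlapNumber {d : ℕ} (ε α : ℝ) (V : (Fin d → ℝ) → ℝ) (κ : ℕ) : Prop :=
  IsGreatest {n | ∃ q : Fin d → ℤ, (∀ x ∈ gridCell ε q, V x = α) ∧
    n = Nat.card {p : (Fin d → ℤ) × ℕ //
      IsMaxAlphaCube ε α V p.1 p.2 ∧ gridCell ε q ⊆ gridCube ε p.1 p.2}} κ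

/-- A cut-off function `η` with constant `Cη`: periodic, `C¹`, `[0,1]`-valued, equal to `1`
on every α-cell, vanishing on the closed concentric subcube of side `ε/2` of every β-cell,
with `‖∇η‖_∞ ≤ Cη / ε`. -/
structure IsCutoff {d : ℕ} (ε Cη α β : ℝ) (V η : (Fin d → ℝ) → ℝ) : Prop where
  periodic : ZPeriodic η
  contDiff : ContDiff ℝ 1 η
  mem_Icc : ∀ x, η x ∈ Set.Icc (0 : ℝ) 1
  eq_one : ∀ q : Fin d → ℤ, (∀ x ∈ gridCell ε q, V x = α) → ∀ x ∈ gridCell ε q, η x = 1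
  eq_zero : ∀ q : Fin d → ℤ, (∀ x ∈ gridCell ε q, V x = β) → ∀ x : Fin d → ℝ,
    (∀ i, ((q i : ℝ) + 1/4) * ε ≤ x i ∧ x i ≤ ((q i : ℝ) + 3/4) * ε) → η x = 0
  grad_le : ∀ x, ‖fderiv ℝ η x‖ ≤ Cη / ε


/-- Distance from `t` to the nearest integer. -/
def distZ (t : ℝ) : ℝ := |Int.fract (t + 1/2) - 1/2|

/-- The periodized `Q₁` hat function centered at `z`:
`λ_z(x) = ∏ᵢ max(0, 1 - |xᵢ - zᵢ|/ε)` interpreted `ℤ^d`-periodically. -/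
def perHat {d : ℕ} (ε : ℝ) (z x : Fin d → ℝ) : ℝ :=
  ∏ i, max 0 (1 - distZ (x i - z i) / ε)

/-!
The hat functions take values in `[0, 1]`, are `d / ε`-Lipschitz, and at most `2 ^ d` of them are
nonzero at any given point, so the product rule bounds the sum of the energies of `λ_z u` by a
multiple of `|||u|||² + ε⁻² ‖u‖²`. It remains to prove the Poincaré inequality
`‖u‖² ≲ L ^ (d + 2) ε² |||u|||²`.

No cube of `L + 1` grid cells per side lies in the valley, hence almost every `x` has a translate
`x + w` in a β-cell, with `w` one of the `(L + 1) ^ d` vectors `ε r`, `r ∈ {0, …, L} ^ d`. There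
`V ≥ c_β ε⁻²`, and `u(x)² ≤ 2 u(x + w)² + 2 (u(x + w) - u(x))²`. By periodicity the first term
integrates to at most `2 ε² / c_β ∫ V u²`, while the second is controlled by the translation
estimate `∫ (u(x + w) - u(x))² ≤ ∫ (∇u · w)² ≤ |w|² ∫ |∇u|²`. The latter follows by splitting the
translation into `N` equal steps, each with the same integral by periodicity, and letting `N → ∞`:
the difference quotients converge almost everywhere by Rademacher's theorem.
-/

section PeriodicFunctions

variable {d : ℕ}

lemma unitCell_subset_Icc (d : ℕ) : unitCell d ⊆ Set.Icc (0 : Fin d → ℝ) 1 :=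
  fun _ hx => ⟨fun i => (hx i trivial).1, fun i => (hx i trivial).2.le⟩

lemma volume_unitCell_ne_top (d : ℕ) : volume (unitCell d) ≠ ⊤ :=
  ((measure_mono (unitCell_subset_Icc d)).trans_lt isCompact_Icc.measure_lt_top).ne

lemma integrableOn_unitCell_of_continuous {f : (Fin d → ℝ) → ℝ} (hf : Continuous f) :
    IntegrableOn f (unitCell d) :=
  hf.integrableOn_Icc.mono_set (unitCell_subset_Icc d)

/-- The lattice `ℤ^d` as an additive subgroup of `ℝ^d`, in the form used by `ZSpan`. -/
abbrev intLattice (d : ℕ) : AddSubgroup (Fin d → ℝ) :=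
  (Submodule.span ℤ (Set.range (Pi.basisFun ℝ (Fin d)))).toAddSubgroup

instance countable_intLattice (d : ℕ) : Countable (intLattice d) :=
  inferInstanceAs (Countable (Submodule.span ℤ (Set.range (Pi.basisFun ℝ (Fin d)))))

lemma isAddFundamentalDomain_unitCell (d : ℕ) :
    IsAddFundamentalDomain (intLattice d) (unitCell d) := by
  simpa only [ZSpan.fundamentalDomain_pi_basisFun, unitCell] using
    ZSpan.isAddFundamentalDomain' (Pi.basisFun ℝ (Fin d)) volume

lemma ZPeriodic.vadd_intLattice {f : (Fin d → ℝ) → ℝ} (hf : ZPeriodic f) (g : intLattice d)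
    (x : Fin d → ℝ) : f (g +ᵥ x) = f x := by
  obtain ⟨g, hg⟩ := g
  rw [Submodule.mem_toAddSubgroup, Module.Basis.mem_span_iff_repr_mem] at hg
  choose k hk using hg
  have hgk : g = fun i => (k i : ℝ) := funext fun i => by simpa using (hk i).symm
  rw [AddSubgroup.vadd_def, vadd_eq_add, add_comm]
  exact hgk ▸ hf x k

open scoped Pointwise in
lemma ZPeriodic.setIntegral_comp_add_right {f : (Fin d → ℝ) → ℝ} (hf : ZPeriodic f)
    (v : Fin d → ℝ) : ∫ x in unitCell d, f (x + v) = ∫ x in unitCell d, f x := by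
  have hcell := isAddFundamentalDomain_unitCell d
  calc ∫ x in unitCell d, f (x + v) = ∫ x in unitCell d, f (v +ᵥ x) := by
        simp only [vadd_eq_add, add_comm]
    _ = ∫ x in v +ᵥ unitCell d, f x :=
        ((measurePreserving_vadd v volume).setIntegral_image_emb
          (measurableEmbedding_const_vadd v) f (unitCell d)).symm
    _ = ∫ x in unitCell d, f x :=
        (hcell.vadd_of_comm v).setIntegral_eq hcell hf.vadd_intLattice

open scoped Pointwise in
lemma ZPeriodic.integrableOn_comp_add_right {f : (Fin d → ℝ) → ℝ} (hf : ZPeriodic f)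
    (hfi : IntegrableOn f (unitCell d)) (v : Fin d → ℝ) :
    IntegrableOn (fun x => f (x + v)) (unitCell d) := by
  have hcell := isAddFundamentalDomain_unitCell d
  have htranslate : IntegrableOn f (v +ᵥ unitCell d) :=
    ((hcell.vadd_of_comm v).integrableOn_iff hcell hf.vadd_intLattice).2 hfi
  simpa only [Function.comp_def, vadd_eq_add, add_comm] using
    ((measurePreserving_vadd v volume).integrableOn_image
      (measurableEmbedding_const_vadd v)).1 htranslate

end PeriodicFunctions

section GradSq

variable {d : ℕ} {f g u : (Fin d → ℝ) → ℝ} {x : Fin d → ℝ} {K : NNReal}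

lemma gradSq_nonneg (f : (Fin d → ℝ) → ℝ) (x : Fin d → ℝ) : 0 ≤ gradSq f x :=
  Finset.sum_nonneg fun _ _ => sq_nonneg _

lemma fderiv_apply_eq_sum (f : (Fin d → ℝ) → ℝ) (x v : Fin d → ℝ) :
    fderiv ℝ f x v = ∑ i, v i * fderiv ℝ f x (Pi.single i 1) := by
  conv_lhs => rw [pi_eq_sum_univ' v]
  simp only [map_sum, map_smul, smul_eq_mul]

lemma fderiv_apply_sq_le (f : (Fin d → ℝ) → ℝ) (x v : Fin d → ℝ) :
    fderiv ℝ f x v ^ 2 ≤ (∑ i, v i ^ 2) * gradSq f x := by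
  rw [fderiv_apply_eq_sum]
  exact Finset.sum_mul_sq_le_sq_mul_sq _ _ _

-- With `a` the vector of partial derivatives, `|a|² = Df(x) a ≤ ‖Df(x)‖ ‖a‖_∞ ≤ ‖Df(x)‖²`.
lemma gradSq_le_norm_fderiv_sq (f : (Fin d → ℝ) → ℝ) (x : Fin d → ℝ) :
    gradSq f x ≤ ‖fderiv ℝ f x‖ ^ 2 := by
  set a : Fin d → ℝ := fun i => fderiv ℝ f x (Pi.single i 1)
  have ha : ‖a‖ ≤ ‖fderiv ℝ f x‖ := (pi_norm_le_iff_of_nonneg (norm_nonneg _)).2 fun i =>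
    (fderiv ℝ f x).unit_le_opNorm (Pi.single i 1) (by rw [Pi.norm_single, norm_one])
  calc gradSq f x = fderiv ℝ f x a := by
        simp only [fderiv_apply_eq_sum f x a, gradSq, a, sq]
    _ ≤ ‖fderiv ℝ f x‖ * ‖a‖ := (le_abs_self _).trans ((fderiv ℝ f x).le_opNorm a)
    _ ≤ ‖fderiv ℝ f x‖ ^ 2 := by rw [sq]; gcongr

lemma gradSq_le_of_lipschitzWith (hf : LipschitzWith K f) (x : Fin d → ℝ) :
    gradSq f x ≤ (K : ℝ) ^ 2 :=
  (gradSq_le_norm_fderiv_sq f x).trans <| by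
    gcongr
    exact norm_fderiv_le_of_lipschitz ℝ hf

lemma gradSq_eq_zero_of_isLocalMin (h : IsLocalMin f x) : gradSq f x = 0 := by
  simp [gradSq, h.fderiv_eq_zero]

lemma gradSq_mul_le (hf : DifferentiableAt ℝ f x) (hg : DifferentiableAt ℝ g x) :
    gradSq (fun y => f y * g y) x ≤ 2 * (f x ^ 2 * gradSq g x + g x ^ 2 * gradSq f x) := by
  simp only [gradSq, Finset.mul_sum, ← Finset.sum_add_distrib, fderiv_fun_mul hf hg, add_apply,
    smul_apply, smul_eq_mul, ← mul_pow]
  exact Finset.sum_le_sum fun i _ => add_sq_le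

lemma measurable_gradSq (f : (Fin d → ℝ) → ℝ) : Measurable (gradSq f) :=
  Finset.measurable_fun_sum _ fun i _ =>
    (measurable_fderiv_apply_const ℝ f (Pi.single i 1)).pow_const 2

lemma integrableOn_gradSq (hf : LipschitzWith K f) : IntegrableOn (gradSq f) (unitCell d) :=
  Measure.integrableOn_of_bounded (volume_unitCell_ne_top d)
    (measurable_gradSq f).aestronglyMeasurable <| Filter.Eventually.of_forall fun x => by
      rw [Real.norm_of_nonneg (gradSq_nonneg f x)]
      exact gradSq_le_of_lipschitzWith hf x

end GradSq

section TranslationEstimate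

lemma abs_mul_sub_le_of_lipschitzWith {E : Type*} [SeminormedAddCommGroup E] [NormedSpace ℝ E]
    {u : E → ℝ} {K : NNReal} (hK : LipschitzWith K u) (c : ℝ) (x v : E) :
    |c * (u (x + c⁻¹ • v) - u x)| ≤ K * ‖v‖ := by
  rcases eq_or_ne c 0 with rfl | hc
  · simpa using by positivity
  calc |c * (u (x + c⁻¹ • v) - u x)| ≤ |c| * (K * ‖c⁻¹ • v‖) := by
        rw [abs_mul]
        gcongr
        simpa using hK.norm_sub_le (x + c⁻¹ • v) x
    _ = K * ‖v‖ := by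
        rw [norm_smul, norm_inv, Real.norm_eq_abs]
        field_simp

lemma tendsto_setIntegral_sq_slope {E : Type*} [NormedAddCommGroup E] [NormedSpace ℝ E]
    [FiniteDimensional ℝ E] [MeasurableSpace E] [BorelSpace E] {μ : Measure E}
    [μ.IsAddHaarMeasure] {s : Set E} (hs : μ s ≠ ⊤) {u : E → ℝ} {K : NNReal}
    (hK : LipschitzWith K u) (v : E) :
    Filter.Tendsto (fun N : ℕ => ∫ x in s, ((N : ℝ) * (u (x + (N : ℝ)⁻¹ • v) - u x)) ^ 2 ∂μ)
      Filter.atTop (nhds (∫ x in s, fderiv ℝ u x v ^ 2 ∂μ)) := by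
  have hc := hK.continuous
  refine tendsto_integral_of_dominated_convergence (fun _ => ((K : ℝ) * ‖v‖) ^ 2) ?_
    (integrableOn_const hs) ?_ ?_
  · exact fun N => Continuous.aestronglyMeasurable (by fun_prop)
  · refine fun N => Filter.Eventually.of_forall fun x => ?_
    rw [norm_pow, Real.norm_eq_abs]
    gcongr
    exact abs_mul_sub_le_of_lipschitzWith hK N x v
  · filter_upwards [ae_restrict_of_ae hK.ae_differentiableAt] with x hx
    simpa only [Function.comp_def, smul_eq_mul] using
      ((hx.hasFDerivAt.lim_real v).comp (tendsto_natCast_atTop_atTop (R := ℝ))).pow 2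

variable {d : ℕ} {u : (Fin d → ℝ) → ℝ}

lemma ZPeriodic.setIntegral_sq_sub_nsmul_le (hu : ZPeriodic u) (hc : Continuous u)
    (w : Fin d → ℝ) (N : ℕ) :
    ∫ x in unitCell d, (u (x + N • w) - u x) ^ 2 ≤
      N ^ 2 * ∫ x in unitCell d, (u (x + w) - u x) ^ 2 := by
  let D : (Fin d → ℝ) → ℝ := fun x => (u (x + w) - u x) ^ 2
  have hDc : Continuous D := by fun_prop
  have hD : ZPeriodic D := fun x k => by simp only [D, hu x k, add_right_comm x _ w, hu (x + w) k]
  have htelescope (x : Fin d → ℝ) :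
      (u (x + N • w) - u x) ^ 2 ≤ N * ∑ k ∈ Finset.range N, D (x + k • w) := by
    have hsum := Finset.sum_range_sub (fun k : ℕ => u (x + k • w)) N
    simp only [zero_smul, add_zero, succ_nsmul, ← add_assoc] at hsum
    simpa only [hsum, Finset.card_range, D] using sq_sum_le_card_mul_sum_sq (s := Finset.range N)
      (f := fun k : ℕ => u (x + k • w + w) - u (x + k • w))
  calc ∫ x in unitCell d, (u (x + N • w) - u x) ^ 2
      ≤ ∫ x in unitCell d, N * ∑ k ∈ Finset.range N, D (x + k • w) :=
        integral_mono (integrableOn_unitCell_of_continuous (by fun_prop))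
          (integrableOn_unitCell_of_continuous (by fun_prop)) htelescope
    _ = N * ∑ k ∈ Finset.range N, ∫ x in unitCell d, D (x + k • w) := by
        rw [integral_const_mul, integral_finsetSum]
        exact fun k _ => integrableOn_unitCell_of_continuous (by fun_prop)
    _ = N ^ 2 * ∫ x in unitCell d, D x := by
        simp only [hD.setIntegral_comp_add_right, Finset.sum_const, Finset.card_range,
          nsmul_eq_mul, sq, mul_assoc]

lemma ZPeriodic.setIntegral_sq_sub_le (hu : ZPeriodic u) {K : NNReal} (hK : LipschitzWith K u)
    (v : Fin d → ℝ) :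
    ∫ x in unitCell d, (u (x + v) - u x) ^ 2 ≤ ∫ x in unitCell d, fderiv ℝ u x v ^ 2 := by
  refine ge_of_tendsto (tendsto_setIntegral_sq_slope (volume_unitCell_ne_top d) hK v) ?_
  filter_upwards [Filter.eventually_gt_atTop 0] with N hN
  have hv : N • (N : ℝ)⁻¹ • v = v := by
    rw [← Nat.cast_smul_eq_nsmul ℝ, smul_inv_smul₀ (Nat.cast_ne_zero.2 hN.ne')]
  simpa only [hv, mul_pow, integral_const_mul] using
    hu.setIntegral_sq_sub_nsmul_le hK.continuous ((N : ℝ)⁻¹ • v) N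

lemma ZPeriodic.setIntegral_sq_sub_le_gradSq (hu : ZPeriodic u) {K : NNReal}
    (hK : LipschitzWith K u) (v : Fin d → ℝ) :
    ∫ x in unitCell d, (u (x + v) - u x) ^ 2 ≤
      (∑ i, v i ^ 2) * ∫ x in unitCell d, gradSq u x := by
  refine (hu.setIntegral_sq_sub_le hK v).trans ?_
  rw [← integral_const_mul]
  exact integral_mono_of_nonneg (Filter.Eventually.of_forall fun _ => sq_nonneg _)
    ((integrableOn_gradSq hK).const_mul _)
    (Filter.Eventually.of_forall fun x => fderiv_apply_sq_le u x v)

end TranslationEstimate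

section EnergyDensity

variable {d : ℕ} {V f u : (Fin d → ℝ) → ℝ} {x : Fin d → ℝ} {K : NNReal}

/-- The integrand `|∇v|² + V v²` of the energy norm. -/
def energyDensity (V v : (Fin d → ℝ) → ℝ) (x : Fin d → ℝ) : ℝ :=
  gradSq v x + V x * v x ^ 2

lemma energySq_eq_setIntegral_energyDensity (V v : (Fin d → ℝ) → ℝ) :
    energySq V v = ∫ x in unitCell d, energyDensity V v x := rfl

lemma energyDensity_nonneg (hV : 0 ≤ V x) (v : (Fin d → ℝ) → ℝ) : 0 ≤ energyDensity V v x :=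
  add_nonneg (gradSq_nonneg v x) (mul_nonneg hV (sq_nonneg _))

lemma integrableOn_energyDensity (hu : LipschitzWith K u)
    (hVu : IntegrableOn (fun x => V x * u x ^ 2) (unitCell d)) :
    IntegrableOn (energyDensity V u) (unitCell d) :=
  (integrableOn_gradSq hu).add hVu

lemma energySq_eq_add (hu : LipschitzWith K u)
    (hVu : IntegrableOn (fun x => V x * u x ^ 2) (unitCell d)) :
    energySq V u = (∫ x in unitCell d, gradSq u x) + ∫ x in unitCell d, V x * u x ^ 2 :=
  integral_add (integrableOn_gradSq hu) hVu

lemma energySq_nonneg (hV : ∀ x, 0 ≤ V x) (v : (Fin d → ℝ) → ℝ) : 0 ≤ energySq V v :=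
  integral_nonneg fun x => energyDensity_nonneg (hV x) v

lemma energyDensity_mul_eq_zero (hf₀ : ∀ y, 0 ≤ f y) (hfx : f x = 0) (hf : DifferentiableAt ℝ f x)
    (hu : DifferentiableAt ℝ u x) : energyDensity V (fun y => f y * u y) x = 0 := by
  have hmin : IsLocalMin f x := Filter.Eventually.of_forall fun y => hfx.trans_le (hf₀ y)
  have hgrad : gradSq (fun y => f y * u y) x ≤ 0 := by
    simpa [hfx, gradSq_eq_zero_of_isLocalMin hmin] using gradSq_mul_le hf hu
  simp [energyDensity, hfx, hgrad.antisymm (gradSq_nonneg _ x)]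

lemma energyDensity_mul_le (hV : 0 ≤ V x) (hfx : f x ∈ Set.Icc (0 : ℝ) 1) (hf : LipschitzWith K f)
    (hfd : DifferentiableAt ℝ f x) (hu : DifferentiableAt ℝ u x) :
    energyDensity V (fun y => f y * u y) x ≤
      2 * energyDensity V u x + 2 * (K : ℝ) ^ 2 * u x ^ 2 := by
  have hf_sq : f x ^ 2 ≤ 1 := pow_le_one₀ hfx.1 hfx.2
  have hgrad : gradSq (fun y => f y * u y) x ≤ 2 * (1 * gradSq u x + u x ^ 2 * K ^ 2) := by
    refine (gradSq_mul_le hfd hu).trans ?_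
    have := gradSq_nonneg u x
    gcongr
    exact gradSq_le_of_lipschitzWith hf x
  have hpot : V x * (f x * u x) ^ 2 ≤ V x * u x ^ 2 := by
    rw [mul_pow]
    gcongr
    exact mul_le_of_le_one_left (sq_nonneg _) hf_sq
  have hpot₀ : 0 ≤ V x * u x ^ 2 := by positivity
  unfold energyDensity
  linarith

lemma integrableOn_energyDensity_mul (hV : ∀ x, 0 ≤ V x) (hf₁ : ∀ x, f x ∈ Set.Icc (0 : ℝ) 1)
    (hf : LipschitzWith K f) {M : NNReal} (hu : LipschitzWith M u)
    (hVu : IntegrableOn (fun x => V x * u x ^ 2) (unitCell d)) :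
    IntegrableOn (energyDensity V fun y => f y * u y) (unitCell d) := by
  have hfc := hf.continuous
  have huc := hu.continuous
  have hpot : IntegrableOn (fun x => V x * (f x * u x) ^ 2) (unitCell d) := by
    simp only [mul_pow, mul_left_comm (V _)]
    refine hVu.bdd_mul (c := 1) (Continuous.aestronglyMeasurable (by fun_prop))
      (Filter.Eventually.of_forall fun x => ?_)
    rw [Real.norm_of_nonneg (sq_nonneg _)]
    exact pow_le_one₀ (hf₁ x).1 (hf₁ x).2
  have hbound : IntegrableOn (fun x => 2 * energyDensity V u x + 2 * (K : ℝ) ^ 2 * u x ^ 2)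
      (unitCell d) :=
    ((integrableOn_energyDensity hu hVu).const_mul _).add
      (integrableOn_unitCell_of_continuous (by fun_prop))
  refine hbound.mono' ((measurable_gradSq _).aestronglyMeasurable.add hpot.1)
    (ae_restrict_of_ae ?_)
  filter_upwards [hf.ae_differentiableAt, hu.ae_differentiableAt] with x hfx hux
  rw [Real.norm_of_nonneg (energyDensity_nonneg (hV x) _)]
  exact energyDensity_mul_le (hV x) (hf₁ x) hf hfx hux

variable {ι : Type*} [Fintype ι] {φ : ι → (Fin d → ℝ) → ℝ} {N : ℕ}

lemma sum_energyDensity_mul_le (hV : 0 ≤ V x) (hφ₁ : ∀ i y, φ i y ∈ Set.Icc (0 : ℝ) 1)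
    (hφ : ∀ i, LipschitzWith K (φ i)) (hN : (Finset.univ.filter fun i => φ i x ≠ 0).card ≤ N)
    (hφd : ∀ i, DifferentiableAt ℝ (φ i) x) (hu : DifferentiableAt ℝ u x) :
    ∑ i, energyDensity V (fun y => φ i y * u y) x ≤
      N * (2 * energyDensity V u x + 2 * (K : ℝ) ^ 2 * u x ^ 2) := by
  have := energyDensity_nonneg hV u
  calc ∑ i, energyDensity V (fun y => φ i y * u y) x
      = ∑ i with φ i x ≠ 0, energyDensity V (fun y => φ i y * u y) x :=
        (Finset.sum_filter_of_ne (p := fun i => φ i x ≠ 0) fun i _ hi hix =>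
          hi (energyDensity_mul_eq_zero (fun y => (hφ₁ i y).1) hix (hφd i) hu)).symm
    _ ≤ (Finset.univ.filter fun i => φ i x ≠ 0).card •
          (2 * energyDensity V u x + 2 * (K : ℝ) ^ 2 * u x ^ 2) :=
        Finset.sum_le_card_nsmul _ _ _ fun i _ =>
          energyDensity_mul_le hV (hφ₁ i x) (hφ i) (hφd i) hu
    _ ≤ N * (2 * energyDensity V u x + 2 * (K : ℝ) ^ 2 * u x ^ 2) := by
        rw [nsmul_eq_mul]
        gcongr

lemma sum_energySq_mul_le (hV : ∀ x, 0 ≤ V x) (hφ₁ : ∀ i x, φ i x ∈ Set.Icc (0 : ℝ) 1)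
    (hφ : ∀ i, LipschitzWith K (φ i))
    (hN : ∀ x, (Finset.univ.filter fun i => φ i x ≠ 0).card ≤ N) {M : NNReal}
    (hu : LipschitzWith M u) (hVu : IntegrableOn (fun x => V x * u x ^ 2) (unitCell d)) :
    ∑ i, energySq V (fun x => φ i x * u x) ≤
      N * (2 * energySq V u + 2 * (K : ℝ) ^ 2 * ∫ x in unitCell d, u x ^ 2) := by
  have huc := hu.continuous
  have hint (i : ι) := integrableOn_energyDensity_mul hV (hφ₁ i) (hφ i) hu hVu
  have hE : IntegrableOn (fun x => 2 * energyDensity V u x) (unitCell d) :=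
    (integrableOn_energyDensity hu hVu).const_mul _
  have hU : IntegrableOn (fun x => 2 * (K : ℝ) ^ 2 * u x ^ 2) (unitCell d) :=
    integrableOn_unitCell_of_continuous (by fun_prop)
  calc ∑ i, energySq V (fun x => φ i x * u x)
      = ∫ x in unitCell d, ∑ i, energyDensity V (fun y => φ i y * u y) x :=
        (integral_finsetSum _ fun i _ => hint i).symm
    _ ≤ ∫ x in unitCell d, N * (2 * energyDensity V u x + 2 * (K : ℝ) ^ 2 * u x ^ 2) := by
        refine integral_mono_ae (integrable_finsetSum _ fun i _ => hint i)
          ((hE.add hU).const_mul _) (ae_restrict_of_ae ?_)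
        filter_upwards [ae_all_iff.2 fun i => (hφ i).ae_differentiableAt,
          hu.ae_differentiableAt] with x hφx hux
        exact sum_energyDensity_mul_le (hV x) hφ₁ hφ (hN x) hφx hux
    _ = N * (2 * energySq V u + 2 * (K : ℝ) ^ 2 * ∫ x in unitCell d, u x ^ 2) := by
        rw [integral_const_mul, integral_add hE hU, integral_const_mul, integral_const_mul,
          energySq_eq_setIntegral_energyDensity]

end EnergyDensity

section Poincare

variable {d : ℕ} {V u : (Fin d → ℝ) → ℝ}

lemma sq_le_two_div_mul_add_two_mul_sq_sub {F : Type*} [Field F] [LinearOrder F]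
    [IsStrictOrderedRing F] {b t : F} (hb : 0 < b) (hbt : b ≤ t) (a c : F) :
    a ^ 2 ≤ 2 / b * (t * c ^ 2) + 2 * (c - a) ^ 2 := by
  have hc : c ^ 2 ≤ t / b * c ^ 2 :=
    le_mul_of_one_le_left (sq_nonneg c) ((one_le_div hb).2 hbt)
  calc a ^ 2 = (c - (c - a)) ^ 2 := by ring
    _ ≤ 2 * c ^ 2 + 2 * (c - a) ^ 2 := by linarith [sq_nonneg (c + (c - a))]
    _ ≤ 2 * (t / b * c ^ 2) + 2 * (c - a) ^ 2 := by gcongr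
    _ = 2 / b * (t * c ^ 2) + 2 * (c - a) ^ 2 := by ring

lemma ZPeriodic.setIntegral_sq_le_of_exists_translate {ι : Type*} [Fintype ι] {K : NNReal}
    {b R : ℝ} {w : ι → Fin d → ℝ} (hV : ZPeriodic V) (hV₀ : ∀ x, 0 ≤ V x) (hu : ZPeriodic u)
    (hK : LipschitzWith K u) (hVu : IntegrableOn (fun x => V x * u x ^ 2) (unitCell d))
    (hb : 0 < b) (hVw : ∀ᵐ x, ∃ i, b ≤ V (x + w i)) (hw : ∀ i, ∑ j, w i j ^ 2 ≤ R) :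
    ∫ x in unitCell d, u x ^ 2 ≤ Fintype.card ι *
      (2 / b * (∫ x in unitCell d, V x * u x ^ 2) +
        2 * (R * ∫ x in unitCell d, gradSq u x)) := by
  have huc := hK.continuous
  have hper : ZPeriodic fun x => V x * u x ^ 2 := fun x k => by simp only [hV x k, hu x k]
  let T : ι → (Fin d → ℝ) → ℝ := fun i x =>
    2 / b * (V (x + w i) * u (x + w i) ^ 2) + 2 * (u (x + w i) - u x) ^ 2
  have hT₀ (i : ι) (x : Fin d → ℝ) : 0 ≤ T i x := by
    have := hV₀ (x + w i)
    positivity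
  have hpot (i : ι) : IntegrableOn (fun x => 2 / b * (V (x + w i) * u (x + w i) ^ 2))
      (unitCell d) := (hper.integrableOn_comp_add_right hVu (w i)).const_mul _
  have hdiff (i : ι) : IntegrableOn (fun x => 2 * (u (x + w i) - u x) ^ 2) (unitCell d) :=
    integrableOn_unitCell_of_continuous (by fun_prop)
  have hpointwise : ∀ᵐ x ∂volume.restrict (unitCell d), u x ^ 2 ≤ ∑ i, T i x := by
    filter_upwards [ae_restrict_of_ae hVw] with x ⟨i, hi⟩
    exact (sq_le_two_div_mul_add_two_mul_sq_sub hb hi (u x) (u (x + w i))).trans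
      (Finset.single_le_sum (fun j _ => hT₀ j x) (Finset.mem_univ i))
  have hT (i : ι) : ∫ x in unitCell d, T i x ≤
      2 / b * (∫ x in unitCell d, V x * u x ^ 2) + 2 * (R * ∫ x in unitCell d, gradSq u x) := by
    rw [integral_add (hpot i) (hdiff i), integral_const_mul, integral_const_mul,
      hper.setIntegral_comp_add_right (w i)]
    gcongr
    refine (hu.setIntegral_sq_sub_le_gradSq hK (w i)).trans ?_
    exact mul_le_mul_of_nonneg_right (hw i) (integral_nonneg (gradSq_nonneg u))
  calc ∫ x in unitCell d, u x ^ 2 ≤ ∫ x in unitCell d, ∑ i, T i x :=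
        integral_mono_ae (integrableOn_unitCell_of_continuous (by fun_prop))
          (integrable_finsetSum _ fun i _ => (hpot i).add (hdiff i)) hpointwise
    _ = ∑ i, ∫ x in unitCell d, T i x := integral_finsetSum _ fun i _ => (hpot i).add (hdiff i)
    _ ≤ Fintype.card ι • _ := Finset.sum_le_card_nsmul _ _ _ fun i _ => hT i
    _ = _ := nsmul_eq_mul _ _

end Poincare

section HatFunctions

lemma distZ_eq_abs_sub_round (t : ℝ) : distZ t = |t - round t| := by
  rw [distZ, round_eq, Int.fract]
  ring_nf

lemma abs_distZ_sub_distZ_le (s t : ℝ) : |distZ s - distZ t| ≤ |s - t| := by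
  rw [distZ_eq_abs_sub_round, distZ_eq_abs_sub_round, ← UnitAddCircle.norm_eq,
    ← UnitAddCircle.norm_eq]
  exact (abs_norm_sub_norm_le _ _).trans (QuotientAddGroup.norm_mk_le_norm (m := s - t))

/-- The one-dimensional periodic hat function `t ↦ max(0, 1 - dist(t, ℤ)/ε)`, whose products
over the coordinates are the `Q₁` hat functions `perHat`. -/
def perHatFactor (ε t : ℝ) : ℝ := max 0 (1 - distZ t / ε)

lemma perHat_eq_prod {d : ℕ} (ε : ℝ) (z x : Fin d → ℝ) :
    perHat ε z x = ∏ i, perHatFactor ε (x i - z i) := rfl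

variable {ε : ℝ}

lemma perHatFactor_mem_Icc (hε : 0 ≤ ε) (t : ℝ) : perHatFactor ε t ∈ Set.Icc (0 : ℝ) 1 :=
  ⟨le_max_left _ _, max_le zero_le_one (sub_le_self 1 (div_nonneg (abs_nonneg _) hε))⟩

lemma distZ_lt_of_perHatFactor_ne_zero (hε : 0 < ε) {t : ℝ} (ht : perHatFactor ε t ≠ 0) :
    distZ t < ε := by
  contrapose! ht
  exact max_eq_left (sub_nonpos.2 ((one_le_div hε).2 ht))

lemma abs_perHatFactor_sub_le (hε : 0 ≤ ε) (s t : ℝ) :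
    |perHatFactor ε s - perHatFactor ε t| ≤ |s - t| / ε :=
  calc |perHatFactor ε s - perHatFactor ε t| ≤ |(1 - distZ s / ε) - (1 - distZ t / ε)| :=
        (abs_max_sub_max_le_max 0 _ 0 _).trans_eq (by simp)
    _ = |distZ s - distZ t| / ε := by
        rw [sub_sub_sub_cancel_left, ← sub_div, abs_div, abs_of_nonneg hε, abs_sub_comm]
    _ ≤ |s - t| / ε := div_le_div_of_nonneg_right (abs_distZ_sub_distZ_le s t) hε

lemma norm_prod_sub_prod_le_sum {ι R : Type*} [NormedCommRing R] [NormOneClass R] (s : Finset ι)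
    {a b : ι → R} (ha : ∀ i ∈ s, ‖a i‖ ≤ 1) (hb : ∀ i ∈ s, ‖b i‖ ≤ 1) :
    ‖∏ i ∈ s, a i - ∏ i ∈ s, b i‖ ≤ ∑ i ∈ s, ‖a i - b i‖ := by
  classical
  induction s using Finset.induction_on with
  | empty => simp
  | insert i s hi ih =>
    simp only [Finset.forall_mem_insert] at ha hb
    rw [Finset.prod_insert hi, Finset.prod_insert hi, Finset.sum_insert hi]
    have hprod : ‖∏ j ∈ s, b j‖ ≤ 1 :=
      (s.norm_prod_le b).trans (Finset.prod_le_one (fun _ _ => norm_nonneg _) hb.2)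
    calc ‖a i * ∏ j ∈ s, a j - b i * ∏ j ∈ s, b j‖
        = ‖(a i - b i) * ∏ j ∈ s, b j + a i * (∏ j ∈ s, a j - ∏ j ∈ s, b j)‖ := by
          congr 1; ring
      _ ≤ ‖a i - b i‖ * 1 + 1 * ‖∏ j ∈ s, a j - ∏ j ∈ s, b j‖ := by
          refine (norm_add_le _ _).trans (add_le_add ?_ ?_)
          · exact norm_mul_le_of_le le_rfl hprod
          · exact norm_mul_le_of_le ha.1 le_rfl
      _ ≤ ‖a i - b i‖ + ∑ j ∈ s, ‖a j - b j‖ := by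
          rw [mul_one, one_mul]
          gcongr
          exact ih ha.2 hb.2

variable {d : ℕ}

lemma perHat_mem_Icc (hε : 0 ≤ ε) (z x : Fin d → ℝ) : perHat ε z x ∈ Set.Icc (0 : ℝ) 1 :=
  ⟨Finset.prod_nonneg fun _ _ => (perHatFactor_mem_Icc hε _).1,
    Finset.prod_le_one (fun _ _ => (perHatFactor_mem_Icc hε _).1)
      fun _ _ => (perHatFactor_mem_Icc hε _).2⟩

lemma lipschitzWith_perHat (hε : 0 ≤ ε) (z : Fin d → ℝ) :
    LipschitzWith (Real.toNNReal (d / ε)) (perHat ε z) := by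
  have hnorm (t : ℝ) : ‖perHatFactor ε t‖ ≤ 1 := by
    rw [Real.norm_of_nonneg (perHatFactor_mem_Icc hε t).1]
    exact (perHatFactor_mem_Icc hε t).2
  refine LipschitzWith.of_dist_le_mul fun x y => ?_
  rw [Real.coe_toNNReal _ (by positivity), Real.dist_eq, perHat_eq_prod, perHat_eq_prod]
  calc |∏ i, perHatFactor ε (x i - z i) - ∏ i, perHatFactor ε (y i - z i)|
      ≤ ∑ i, |perHatFactor ε (x i - z i) - perHatFactor ε (y i - z i)| :=
        norm_prod_sub_prod_le_sum _ (fun _ _ => hnorm _) fun _ _ => hnorm _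
    _ ≤ ∑ _i : Fin d, dist x y / ε := by
        gcongr with i
        refine (abs_perHatFactor_sub_le hε _ _).trans ?_
        rw [sub_sub_sub_cancel_right, ← Real.dist_eq]
        gcongr
        exact dist_le_pi_dist x y i
    _ = d / ε * dist x y := by
        rw [Finset.sum_const, Finset.card_univ, Fintype.card_fin, nsmul_eq_mul]
        ring

variable {n : ℕ}

-- A vertex `ε k` within `ℤ`-distance `ε` of `t` lifts to an integer `j ≡ k mod n` with
-- `|n t - j| < 1`, so `j` is `⌊n t⌋` or `⌊n t⌋ + 1`.
lemma card_perHatFactor_ne_zero_le_two (hε : 0 < ε) (hn : ε * n = 1) (t : ℝ) :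
    (Finset.univ.filter fun k : Fin n => perHatFactor ε (t - ε * (k : ℕ)) ≠ 0).card ≤ 2 := by
  let lift : Fin n → ℤ := fun k => (k : ℕ) + n * round (t - ε * (k : ℕ))
  have hmaps : ∀ k ∈ Finset.univ.filter fun k : Fin n => perHatFactor ε (t - ε * (k : ℕ)) ≠ 0,
      lift k ∈ Finset.Icc ⌊n * t⌋ (⌊n * t⌋ + 1) := by
    intro k hk
    have hdist := distZ_lt_of_perHatFactor_ne_zero hε (Finset.mem_filter.1 hk).2
    have hscale : n * t - lift k = n * (t - ε * (k : ℕ) - round (t - ε * (k : ℕ))) := by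
      simp only [lift, Int.cast_add, Int.cast_mul, Int.cast_natCast]
      linear_combination (k : ℕ) * hn
    have hlt : |n * t - lift k| < 1 := by
      rw [hscale, abs_mul, Nat.abs_cast, ← distZ_eq_abs_sub_round, ← hn, mul_comm]
      gcongr
      exact Nat.cast_pos.2 k.pos
    rw [abs_lt] at hlt
    rw [Finset.mem_Icc, Int.floor_le_iff]
    exact ⟨by linarith, by rw [← Int.floor_add_one, Int.le_floor]; linarith⟩
  have hinj : Function.Injective lift := fun k l hkl => by
    have hmod := congrArg (· % (n : ℤ)) hkl
    simp only [lift, Int.add_mul_emod_self_left] at hmod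
    exact Fin.ext (Nat.mod_eq_of_lt k.2 ▸ Nat.mod_eq_of_lt l.2 ▸ by exact_mod_cast hmod)
  calc _ ≤ (Finset.Icc ⌊n * t⌋ (⌊n * t⌋ + 1)).card :=
        Finset.card_le_card_of_injOn lift hmaps hinj.injOn
    _ = 2 := by rw [Int.card_Icc]; omega

lemma card_perHat_ne_zero_le (hε : 0 < ε) (hn : ε * n = 1) (x : Fin d → ℝ) :
    (Finset.univ.filter fun k : Fin d → Fin n =>
      perHat ε (fun i => ε * (k i : ℕ)) x ≠ 0).card ≤ 2 ^ d := by
  let A : Fin d → Finset (Fin n) := fun i =>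
    Finset.univ.filter fun k : Fin n => perHatFactor ε (x i - ε * (k : ℕ)) ≠ 0
  calc _ ≤ (Fintype.piFinset A).card := by
        refine Finset.card_le_card fun k hk => Fintype.mem_piFinset.2 fun i => ?_
        rw [Finset.mem_filter_univ, perHat_eq_prod, Finset.prod_ne_zero_iff] at hk
        exact Finset.mem_filter.2 ⟨Finset.mem_univ _, hk i (Finset.mem_univ i)⟩
    _ = ∏ i, (A i).card := Fintype.card_piFinset A
    _ ≤ ∏ _i : Fin d, 2 :=
        Finset.prod_le_prod' fun i _ => card_perHatFactor_ne_zero_le_two hε hn (x i)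
    _ = 2 ^ d := by rw [Finset.prod_const, Finset.card_univ, Fintype.card_fin]

end HatFunctions

section GridGeometry

variable {d : ℕ} {ε : ℝ}

lemma center_mem_gridCell (hε : 0 < ε) (q : Fin d → ℤ) :
    (fun i => ((q i : ℝ) + 1 / 2) * ε) ∈ gridCell ε q := fun i => by
  constructor <;> linarith

lemma mem_gridCell_floor (hε : 0 < ε) {x : Fin d → ℝ} (hx : ∀ i, ∀ k : ℤ, x i ≠ k * ε) :
    x ∈ gridCell ε fun i => ⌊x i / ε⌋ := fun i =>
  ⟨((le_div_iff₀ hε).1 (Int.floor_le _)).lt_of_ne (hx i _).symm,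
    (div_lt_iff₀ hε).1 (Int.lt_floor_add_one _)⟩

lemma ae_forall_ne_intCast_mul (d : ℕ) (ε : ℝ) :
    ∀ᵐ x : Fin d → ℝ, ∀ i, ∀ k : ℤ, x i ≠ k * ε :=
  ae_all_iff.2 fun i => ae_all_iff.2 fun _ =>
    Measure.ae_eval_ne (μ := fun _ : Fin d => (volume : Measure ℝ)) i _

lemma gridCell_add_natCast_mul_mem {q : Fin d → ℤ} {x : Fin d → ℝ} (hx : x ∈ gridCell ε q)
    (r : Fin d → ℕ) : (x + fun i => ε * r i) ∈ gridCell ε fun i => q i + r i := fun i => by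
  have := hx i
  simp only [Pi.add_apply]
  push_cast
  constructor <;> linarith

lemma gridCube_eq_Icc (ε : ℝ) (q : Fin d → ℤ) (m : ℕ) :
    gridCube ε q m = Set.Icc (fun i => (q i : ℝ) * ε) fun i => ((q i : ℝ) + m) * ε :=
  Set.ext fun _ => forall_and

lemma closure_gridCell (hε : 0 < ε) (q : Fin d → ℤ) :
    closure (gridCell ε q) = gridCube ε q 1 := by
  have hpi : gridCell ε q =
      Set.univ.pi fun i => Set.Ioo ((q i : ℝ) * ε) (((q i : ℝ) + 1) * ε) :=
    Set.ext fun _ => Set.mem_univ_pi.symm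
  have hside (i : Fin d) : (q i : ℝ) * ε ≠ ((q i : ℝ) + 1) * ε := by linarith
  rw [hpi, closure_pi_set, gridCube_eq_Icc, ← Set.pi_univ_Icc]
  simp only [closure_Ioo (hside _), Nat.cast_one]

lemma gridCube_one_subset_of_gridCell_subset (hε : 0 < ε) {p q : Fin d → ℤ} {m : ℕ}
    (h : gridCell ε q ⊆ gridCube ε p m) : gridCube ε q 1 ⊆ gridCube ε p m :=
  closure_gridCell hε q ▸ closure_minimal h (gridCube_eq_Icc ε p m ▸ isClosed_Icc)

lemma gridCube_subset_gridCube_iff (hε : 0 < ε) {p q : Fin d → ℤ} {k m : ℕ} :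
    gridCube ε q k ⊆ gridCube ε p m ↔ ∀ i, p i ≤ q i ∧ q i + k ≤ p i + m := by
  have hside : (fun i => (q i : ℝ) * ε) ≤ fun i => ((q i : ℝ) + k) * ε := fun i => by
    simp only
    gcongr
    exact le_add_of_nonneg_right k.cast_nonneg
  rw [gridCube_eq_Icc, gridCube_eq_Icc, Set.Icc_subset_Icc_iff hside, Pi.le_def, Pi.le_def,
    ← forall_and]
  simp only [mul_le_mul_iff_left₀ hε]
  exact_mod_cast Iff.rfl

lemma exists_fin_natCast_le_le_add_one {R : Type*} [Semiring R] [LinearOrder R]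
    [IsStrictOrderedRing R] [FloorSemiring R] {s : R} {m : ℕ} (hs₀ : 0 ≤ s) (hs : s ≤ m + 1) :
    ∃ r : Fin (m + 1), ((r : ℕ) : R) ≤ s ∧ s ≤ (r : ℕ) + 1 := by
  rcases hs.eq_or_lt with rfl | hs
  · exact ⟨Fin.last m, by simp, by simp⟩
  · exact ⟨⟨⌊s⌋₊, (Nat.floor_lt hs₀).2 (by exact_mod_cast hs)⟩, Nat.floor_le hs₀,
      (Nat.lt_floor_add_one s).le⟩

lemma gridCube_succ_subset_iUnion (hε : 0 < ε) (q : Fin d → ℤ) (m : ℕ) :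
    gridCube ε q (m + 1) ⊆
      ⋃ r : Fin d → Fin (m + 1), gridCube ε (fun i => q i + (r i : ℕ)) 1 := by
  intro y hy
  have hr (i : Fin d) : ∃ r : Fin (m + 1),
      ((r : ℕ) : ℝ) ≤ y i / ε - q i ∧ y i / ε - q i ≤ (r : ℕ) + 1 := by
    have hlow := (le_div_iff₀ hε).2 (hy i).1
    have hupp := (div_le_iff₀ hε).2 (hy i).2
    push_cast at hupp
    exact exists_fin_natCast_le_le_add_one (by linarith) (by linarith)
  choose r hr using hr
  refine Set.mem_iUnion.2 ⟨r, fun i => ?_⟩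
  rw [← le_div_iff₀ hε, ← div_le_iff₀ hε]
  push_cast
  constructor <;> linarith [hr i]

end GridGeometry

section PotentialValleys

variable {d n m L κ : ℕ} {ε α β : ℝ} {V u : (Fin d → ℝ) → ℝ} {q : Fin d → ℤ}

lemma IsGridPotential.nonneg (hV : IsGridPotential ε α β V) (hα : 0 ≤ α) (hβ : 0 ≤ β)
    (x : Fin d → ℝ) : 0 ≤ V x := by
  rcases hV.2.1 x with h | h <;> rwa [h]

lemma IsGridPotential.aestronglyMeasurable (hV : IsGridPotential ε α β V) (hε : 0 < ε) :
    AEStronglyMeasurable V volume := by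
  let center : (Fin d → ℤ) → Fin d → ℝ := fun q i => ((q i : ℝ) + 1 / 2) * ε
  have hmeas : Measurable fun x : Fin d → ℝ => V (center fun i => ⌊x i / ε⌋) :=
    (measurable_of_countable (V ∘ center)).comp (by fun_prop)
  refine ⟨_, hmeas.stronglyMeasurable, ?_⟩
  filter_upwards [ae_forall_ne_intCast_mul d ε] with x hx
  have hcell := mem_gridCell_floor hε hx
  have hcenter := center_mem_gridCell hε fun i => ⌊x i / ε⌋
  rcases hV.2.2 fun i => ⌊x i / ε⌋ with h | h <;> rw [h _ hcell, h _ hcenter]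

lemma IsGridPotential.integrableOn_mul_sq (hV : IsGridPotential ε α β V) (hε : 0 < ε)
    (hu : Continuous u) : IntegrableOn (fun x => V x * u x ^ 2) (unitCell d) := by
  refine (integrableOn_unitCell_of_continuous (hu.pow 2)).bdd_mul (c := max |α| |β|)
    (hV.aestronglyMeasurable hε).restrict (Filter.Eventually.of_forall fun x => ?_)
  rcases hV.2.1 x with h | h <;> simp [h]

lemma isAlphaCube_succ_of_forall_gridCell (hε : 0 < ε)
    (h : ∀ r : Fin d → Fin (m + 1), ∀ x ∈ gridCell ε (fun i => q i + (r i : ℕ)), V x = α) :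
    IsAlphaCube ε α V q (m + 1) := by
  refine ⟨Nat.le_add_left 1 m, (gridCube_succ_subset_iUnion hε q m).trans ?_⟩
  refine Set.iUnion_subset fun r => ?_
  rw [← closure_gridCell hε]
  exact closure_mono (h r)

-- A cube of side at least `1` contains a translate of every point by `ℤ^d`.
lemma IsAlphaCube.closure_eq_univ (h : IsAlphaCube ε α V q m) (hV : ZPeriodic V) (hε : 0 < ε)
    (hn : ε * n = 1) (hnm : n ≤ m) : closure {x | V x = α} = Set.univ := by
  refine Set.eq_univ_of_forall fun y => ?_
  let k : Fin d → ℝ := fun i => (⌊y i - q i * ε⌋ : ℝ)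
  have hmem : y - k ∈ gridCube ε q m := fun i => by
    have hfloor := Int.floor_le (y i - q i * ε)
    have hlt := Int.lt_floor_add_one (y i - q i * ε)
    have hside : 1 ≤ ε * m := hn ▸ by gcongr
    simp only [Pi.sub_apply, k]
    constructor <;> linarith
  have htranslate : Set.MapsTo (· + k) {x | V x = α} {x | V x = α} := fun x hx =>
    (hV x fun i => ⌊y i - q i * ε⌋).trans hx
  simpa only [sub_add_cancel] using
    map_mem_closure (continuous_add_const k) (h.2 hmem) htranslate

lemma IsValleyWidth.closure_ne_univ (hL : IsValleyWidth ε α V L) (hε : 0 < ε) :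
    closure {x | V x = α} ≠ Set.univ := by
  intro huniv
  have hα (q : Fin d → ℤ) {m : ℕ} (hm : 1 ≤ m) : IsAlphaCube ε α V q m :=
    ⟨hm, huniv ▸ Set.subset_univ _⟩
  rcases hL with ⟨⟨q, hq⟩, hmax⟩ | ⟨hnone, -⟩
  · have hsucc := hα q (Nat.le_add_left 1 L)
    have heq := hq.2 q (L + 1) hsucc ((gridCube_subset_gridCube_iff hε).2 fun i => by lia)
    exact L.not_succ_le_self (hmax ⟨q, hsucc, heq ▸ hq.2⟩)
  · exact hnone 0 1 (hα 0 le_rfl)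

lemma IsAlphaCube.exists_isMaxAlphaCube (h : IsAlphaCube ε α V q m) (hε : 0 < ε)
    (hbound : ∀ q' m', IsAlphaCube ε α V q' m' → m' ≤ n) :
    ∃ q' m', IsMaxAlphaCube ε α V q' m' ∧ gridCube ε q m ⊆ gridCube ε q' m' ∧ m ≤ m' := by
  classical
  let P : ℕ → Prop := fun m' => ∃ q', IsAlphaCube ε α V q' m' ∧ gridCube ε q m ⊆ gridCube ε q' m'
  have hPm : P m := ⟨q, h, subset_rfl⟩
  obtain ⟨q', hq', hsub⟩ := Nat.findGreatest_spec (hbound q m h) hPm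
  refine ⟨q', Nat.findGreatest P n, ⟨hq', fun q'' m'' h'' hsub'' => ?_⟩, hsub,
    Nat.le_findGreatest (hbound q m h) hPm⟩
  have hle : m'' ≤ Nat.findGreatest P n :=
    Nat.le_findGreatest (hbound q'' m'' h'') ⟨q'', h'', hsub.trans hsub''⟩
  refine hsub''.antisymm ((gridCube_subset_gridCube_iff hε).2 fun i => ?_)
  have := (gridCube_subset_gridCube_iff hε).1 hsub'' i
  lia

lemma IsValleyWidth.le_of_isAlphaCube (hL : IsValleyWidth ε α V L) (hV : ZPeriodic V)
    (hε : 0 < ε) (hn : ε * n = 1) (h : IsAlphaCube ε α V q m) : m ≤ L := by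
  have hbound (q' : Fin d → ℤ) (m' : ℕ) (h' : IsAlphaCube ε α V q' m') : m' ≤ n := by
    by_contra! hlt
    exact hL.closure_ne_univ hε (h'.closure_eq_univ hV hε hn hlt.le)
  rcases hL with ⟨-, hmax⟩ | ⟨hnone, -⟩
  · obtain ⟨q', m', hq', -, hle⟩ := h.exists_isMaxAlphaCube hε hbound
    exact hle.trans (hmax ⟨q', hq'⟩)
  · exact absurd h (hnone q m)

lemma IsValleyWidth.one_le (hL : IsValleyWidth ε α V L) : 1 ≤ L := by
  rcases hL with ⟨⟨q, hq⟩, -⟩ | ⟨-, rfl⟩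
  exacts [hq.1.1, le_rfl]

lemma IsValleyWidth.exists_translate_eq (hL : IsValleyWidth ε α V L)
    (hV : IsGridPotential ε α β V) (hε : 0 < ε) (hn : ε * n = 1) {x : Fin d → ℝ}
    (hx : ∀ i, ∀ k : ℤ, x i ≠ k * ε) :
    ∃ r : Fin d → Fin (L + 1), V (x + fun i => ε * (r i : ℕ)) = β := by
  by_contra! hβ
  refine (hL.le_of_isAlphaCube hV.1 hε hn (q := fun i => ⌊x i / ε⌋)
    (isAlphaCube_succ_of_forall_gridCell hε fun r => ?_)).not_gt (Nat.lt_succ_self L)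
  refine (hV.2.2 _).resolve_right fun hcell => hβ r (hcell _ ?_)
  exact gridCell_add_natCast_mul_mem (mem_gridCell_floor hε hx) fun i => r i

lemma finite_gridCubes_containing_gridCell (hε : 0 < ε) (q : Fin d → ℤ) (L : ℕ) :
    {p : (Fin d → ℤ) × ℕ | p.2 ≤ L ∧ gridCell ε q ⊆ gridCube ε p.1 p.2}.Finite := by
  refine ((Set.finite_Icc (fun i => q i - L) q).prod (Set.finite_Iic L)).subset ?_
  rintro ⟨p, m⟩ ⟨hm, hsub⟩
  have hpq := (gridCube_subset_gridCube_iff hε).1 (gridCube_one_subset_of_gridCell_subset hε hsub)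
  simp only at hm hpq
  exact ⟨⟨fun i => by have := hpq i; simp only; lia, fun i => (hpq i).1⟩, hm⟩

lemma IsOverlapNumber.one_le (hκ : IsOverlapNumber ε α V κ) (hL : IsValleyWidth ε α V L)
    (hV : ZPeriodic V) (hε : 0 < ε) (hn : ε * n = 1) : 1 ≤ κ := by
  have hbound (q' : Fin d → ℤ) (m' : ℕ) (h' : IsAlphaCube ε α V q' m') : m' ≤ L :=
    hL.le_of_isAlphaCube hV hε hn h'
  obtain ⟨⟨q, hq, rfl⟩, -⟩ := hκ
  have hcube : IsAlphaCube ε α V q 1 :=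
    ⟨le_rfl, closure_gridCell hε q ▸ closure_mono hq⟩
  obtain ⟨q', m', hmax, hsub, -⟩ := hcube.exists_isMaxAlphaCube hε hbound
  have hcell : gridCell ε q ⊆ gridCube ε q' m' :=
    subset_closure.trans ((closure_gridCell hε q).trans_subset hsub)
  refine Nat.card_pos_iff.2 ⟨⟨⟨(q', m'), hmax, hcell⟩⟩, ?_⟩
  exact (finite_gridCubes_containing_gridCell hε q L).subset fun p hp =>
    ⟨hbound _ _ hp.1.1, hp.2⟩

end PotentialValleys

section StableDecomposition

variable {d n L : ℕ} {c ε α β : ℝ} {V u : (Fin d → ℝ) → ℝ} {K : NNReal}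

lemma IsValleyWidth.setIntegral_sq_le_energySq (hL : IsValleyWidth ε α V L)
    (hV : IsGridPotential ε α β V) (hε : 0 < ε) (hn : ε * n = 1) (hα : 0 ≤ α) (hc : 0 < c)
    (hβ : c / ε ^ 2 ≤ β) (hu : ZPeriodic u) (hK : LipschitzWith K u) :
    ∫ x in unitCell d, u x ^ 2 ≤
      2 ^ (d + 1) * (1 / c + d) * L ^ (d + 2) * ε ^ 2 * energySq V u := by
  have hb : 0 < c / ε ^ 2 := by positivity
  have hV₀ := hV.nonneg hα (hb.le.trans hβ)
  have hVu := hV.integrableOn_mul_sq hε hK.continuous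
  have hL₁ : (1 : ℝ) ≤ L := Nat.one_le_cast.2 hL.one_le
  have hreach : ∀ᵐ x, ∃ r : Fin d → Fin (L + 1), c / ε ^ 2 ≤ V (x + fun i => ε * (r i : ℕ)) := by
    filter_upwards [ae_forall_ne_intCast_mul d ε] with x hx
    obtain ⟨r, hr⟩ := hL.exists_translate_eq hV hε hn hx
    exact ⟨r, hr.symm ▸ hβ⟩
  have hlength (r : Fin d → Fin (L + 1)) : ∑ j, (ε * ((r j : ℕ) : ℝ)) ^ 2 ≤ d * (ε * L) ^ 2 := by
    calc ∑ j, (ε * ((r j : ℕ) : ℝ)) ^ 2 ≤ ∑ _j : Fin d, (ε * L) ^ 2 := by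
          gcongr with j
          exact Nat.le_of_lt_succ (r j).2
      _ = d * (ε * L) ^ 2 := by
          rw [Finset.sum_const, Finset.card_univ, Fintype.card_fin, nsmul_eq_mul]
  have hpoincare := hV.1.setIntegral_sq_le_of_exists_translate hV₀ hu hK hVu hb hreach hlength
  rw [energySq_eq_add hK hVu]
  simp only [Fintype.card_fun, Fintype.card_fin] at hpoincare
  set G := ∫ x in unitCell d, gradSq u x
  set P := ∫ x in unitCell d, V x * u x ^ 2
  have hG : 0 ≤ G := integral_nonneg (gradSq_nonneg u)
  have hP : 0 ≤ P := integral_nonneg fun x => mul_nonneg (hV₀ x) (sq_nonneg _)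
  calc ∫ x in unitCell d, u x ^ 2
      ≤ ((L + 1 : ℕ) ^ d : ℕ) * (2 / (c / ε ^ 2) * P + 2 * (d * (ε * L) ^ 2 * G)) := hpoincare
    _ = 2 * ε ^ 2 * (L + 1) ^ d * (1 / c * 1 * P + d * L ^ 2 * G) := by
        push_cast
        field_simp
    _ ≤ 2 * ε ^ 2 * (2 * L) ^ d * (1 / c * L ^ 2 * (G + P) + d * L ^ 2 * (G + P)) := by
        gcongr
        · linarith
        · exact one_le_pow₀ hL₁
        · linarith
        · linarith
    _ = 2 ^ (d + 1) * (1 / c + d) * L ^ (d + 2) * ε ^ 2 * (G + P) := by ring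

lemma sum_energySq_perHat_mul_le (hV : IsGridPotential ε α β V) (hε : 0 < ε) (hn : ε * n = 1)
    (hV₀ : ∀ x, 0 ≤ V x) (hK : LipschitzWith K u) :
    ∑ z : Fin d → Fin n, energySq V (fun x => perHat ε (fun i => ε * ((z i : ℕ) : ℝ)) x * u x) ≤
      2 ^ (d + 1) * (energySq V u + (d / ε) ^ 2 * ∫ x in unitCell d, u x ^ 2) := by
  have hsum := sum_energySq_mul_le hV₀
    (fun (z : Fin d → Fin n) => perHat_mem_Icc hε.le fun i => ε * ((z i : ℕ) : ℝ))
    (fun _ => lipschitzWith_perHat hε.le _) (card_perHat_ne_zero_le hε hn) hK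
    (hV.integrableOn_mul_sq hε hK.continuous)
  refine hsum.trans_eq ?_
  rw [Real.coe_toNNReal _ (by positivity)]
  push_cast
  ring

end StableDecomposition

lemma pow_add_two_le_two_pow_mul_one_add (d L : ℕ) {κ : ℕ} (hκ : 1 ≤ κ) :
    L ^ (d + 2) ≤ 2 ^ (d + 1) * (1 + (κ * L ^ d) ^ 2 * L ^ 2) :=
  calc L ^ (d + 2) = L ^ d * L ^ 2 := pow_add L d 2
    _ ≤ κ * L ^ d * L ^ 2 := by gcongr; exact Nat.le_mul_of_pos_left _ hκ
    _ ≤ (κ * L ^ d) ^ 2 * L ^ 2 := by gcongr; exact Nat.le_self_pow two_ne_zero _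
    _ ≤ 1 + (κ * L ^ d) ^ 2 * L ^ 2 := Nat.le_add_left _ _
    _ ≤ 2 ^ (d + 1) * (1 + (κ * L ^ d) ^ 2 * L ^ 2) :=
        Nat.le_mul_of_pos_left _ (pow_pos two_pos _)

theorem statement4_general (d : ℕ) (c_β : ℝ) (hcβ : 0 < c_β) :
    ∃ C : ℝ, 0 < C ∧
      ∀ (ε α β : ℝ) (V : (Fin d → ℝ) → ℝ) (n L : ℕ),
        0 < ε → ε * n = 1 → 0 ≤ α → IsGridPotential ε α β V → c_β / ε ^ 2 ≤ β →
        IsValleyWidth ε α V L →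
        ∀ u : (Fin d → ℝ) → ℝ, ZPeriodic u → (∃ K : NNReal, LipschitzWith K u) →
          ∑ z : Fin d → Fin n,
              energySq V (fun x => perHat ε (fun i => ε * ((z i : ℕ) : ℝ)) x * u x) ≤
            C * (L : ℝ) ^ (d + 2) * energySq V u := by
  refine ⟨2 ^ (d + 1) * (1 + 2 ^ (d + 1) * d ^ 2 * (1 / c_β + d)), by positivity, ?_⟩
  intro ε α β V n L hε hn hα hV hβ hL u hu ⟨K, hK⟩
  have hV₀ : ∀ x, 0 ≤ V x := hV.nonneg hα (le_trans (by positivity) hβ)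
  have hE : 0 ≤ energySq V u := energySq_nonneg hV₀ u
  have hL₁ : (1 : ℝ) ≤ L ^ (d + 2) := one_le_pow₀ (Nat.one_le_cast.2 hL.one_le)
  calc _ ≤ 2 ^ (d + 1) * (energySq V u + (d / ε) ^ 2 * ∫ x in unitCell d, u x ^ 2) :=
        sum_energySq_perHat_mul_le hV hε hn hV₀ hK
    _ ≤ 2 ^ (d + 1) * (energySq V u + (d / ε) ^ 2 *
          (2 ^ (d + 1) * (1 / c_β + d) * L ^ (d + 2) * ε ^ 2 * energySq V u)) := by
        gcongr
        exact hL.setIntegral_sq_le_energySq hV hε hn hα hcβ hβ hu hK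
    _ = 2 ^ (d + 1) * (1 * energySq V u +
          2 ^ (d + 1) * d ^ 2 * (1 / c_β + d) * L ^ (d + 2) * energySq V u) := by
        field_simp
    _ ≤ 2 ^ (d + 1) * (L ^ (d + 2) * energySq V u +
          2 ^ (d + 1) * d ^ 2 * (1 / c_β + d) * L ^ (d + 2) * energySq V u) := by gcongr
    _ = 2 ^ (d + 1) * (1 + 2 ^ (d + 1) * d ^ 2 * (1 / c_β + d)) * L ^ (d + 2) *
          energySq V u := by ring

/-- Lemma 3.2 of the paper, the stable-decomposition constant `K₁`:
if the β-region is nonempty, a cut-off function with constant `Cη` exists and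
`β ≥ c_β ε⁻²`, there is `C = C(d, Cη, c_β)` such that for the periodic `Q₁` partition of
unity `(λ_z)` on the grid vertices `εℤ^d / ℤ^d`, every periodic Lipschitz `u` satisfies
`Σ_z |||λ_z u|||² ≤ C · 2^{d+1} (1 + (κ L^d)² L²) |||u|||²`. -/
theorem statement4 (d : ℕ) (hd : 1 ≤ d) (Cη c_β : ℝ) (hcβ : 0 < c_β) :
    ∃ C : ℝ, 0 < C ∧
      ∀ (ε α β : ℝ) (V : (Fin d → ℝ) → ℝ) (n L κ : ℕ),
        0 < ε → 0 < n → ε * n = 1 →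
        0 ≤ α → α ≤ β →
        IsGridPotential ε α β V →
        (∃ q : Fin d → ℤ, ∀ x ∈ gridCell ε q, V x = β) →
        (∃ η : (Fin d → ℝ) → ℝ, IsCutoff ε Cη α β V η) →
        c_β / ε ^ 2 ≤ β →
        IsValleyWidth ε α V L → IsOverlapNumber ε α V κ →
        ∀ u : (Fin d → ℝ) → ℝ, ZPeriodic u → (∃ K : NNReal, LipschitzWith K u) →
          ∑ z : Fin d → Fin n,
              energySq V (fun x => perHat ε (fun i => ε * ((z i : ℕ) : ℝ)) x * u x) ≤
            C * 2 ^ (d + 1) * (1 + ((κ : ℝ) * (L : ℝ) ^ d) ^ 2 * (L : ℝ) ^ 2) *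
              energySq V u := by
  obtain ⟨C, hC, hbound⟩ := statement4_general d c_β hcβ
  refine ⟨C, hC, fun ε α β V n L κ hε _ hn hα hαβ hV _ _ hβ hL hκ u hu hK => ?_⟩
  have hκL : (L : ℝ) ^ (d + 2) ≤ 2 ^ (d + 1) * (1 + (κ * L ^ d) ^ 2 * L ^ 2) := by
    exact_mod_cast pow_add_two_le_two_pow_mul_one_add d L (hκ.one_le hL hV.1 hε hn)
  refine (hbound ε α β V n L hε hn hα hV hβ hL u hu hK).trans ?_
  rw [mul_assoc C (2 ^ (d + 1))]
  exact mul_le_mul_of_nonneg_right (mul_le_mul_of_nonneg_left hκL hC.le)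
    (energySq_nonneg (hV.nonneg hα (hα.trans hαβ)) u)

end
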